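/- Let C be a convex body in ℝ², let p₁ ≠ p₂ be points with I = C_{p₁} ∩ C_{p₂} having nonempty interior, and let (u, v, l, σ₁, σ₂) be a splitting configuration for (C, p₁, p₂). Let p ∈ ℝ² be a point such that p, p₁, p₂ are not collinear. If neither u nor v lies in the interior of C_p and the interiors of I and C_p have a common point, then C_p ∩ I = C_p ∩ C_{p₁} or C_p ∩ I = C_p ∩ C_{p₂}. -/

import Mathlib

/-!
Write `v = u + d`, and use coordinates `T`, `G` along the basis `d`, `e = p₂ - p₁`, so that
`G (x - u)` is the height of `x` above the line `l`.

Suppose both equalities fail. Walking inside `C_p` from a common interior point of the three bodies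
to a point of `C_{p₁} \ C_{p₂}` gives a point `a ∈ ∂C_{p₂}` interior to `C_p` and `C_{p₁}`;
symmetrically there is `b ∈ ∂C_{p₁}` interior to `C_p` and `C_{p₂}`. Both lie on `∂I`, with
`a ∉ σ₁` and `b ∉ σ₂`. A connectedness argument (`separation`, `same_side`) shows that `a` and `b`
are not strictly on the same side of `l`. So `C_p` has an interior point on the open chord `(u, v)`,
and since `u`, `v` are not interior to `C_p`, the section `C_p ∩ l` is contained in `[u, v]`.

The body `C_p` contains the parallelogram with opposite sides `[u, v] + (p - p₁)` and
`[u, v] + (p - p₂)`. If it met `l`, its section, of length `|v - u|`, would be exactly `[u, v]`, and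
`p` would lie on the line through `p₁` and `p₂`. So it lies strictly on one side of `l`. If `a` (or
`b`) is strictly on the other side, a homothety argument (`mem_interior_of_translate`) puts it in
the interior of `C_{p₂}` (or `C_{p₁}`), a contradiction. There remains the case where `a` or `b`
lies on `l`; then `l` supports one of the bodies and the same argument applies (`degenerate`).
-/

open EuclideanGeometry

noncomputable section

/-- The Euclidean plane `ℝ²`. -/
abbrev Pt := EuclideanSpace ℝ (Fin 2)

/-- The translate `Γ_p = p + Γ` of a set `Γ ⊆ ℝ²`. -/
def tr (p : Pt) (Γ : Set Pt) : Set Pt := (p + ·) '' Γ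
/-- A convex body in `ℝ²`: a compact convex set with nonempty interior. -/
def IsConvexBody (C : Set Pt) : Prop :=
  IsCompact C ∧ Convex ℝ C ∧ (interior C).Nonempty

/-- Two sets intersect plainly: `∂C ∩ D` and `∂D ∩ C` are both connected. -/
def PlainlyIntersect (C D : Set Pt) : Prop :=
  IsPreconnected (frontier C ∩ D) ∧ IsPreconnected (frontier D ∩ C)

/-- A line in `ℝ²`. -/
def IsLine (l : Set Pt) : Prop :=
  ∃ a d : Pt, d ≠ 0 ∧ l = {x | ∃ t : ℝ, x = a + t • d}

/-- `H` is a closed side of the line `l`. -/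
def IsSideOf (l H : Set Pt) : Prop :=
  ∃ (f : Pt →ₗ[ℝ] ℝ) (c : ℝ), f ≠ 0 ∧ l = {x | f x = c} ∧ H = {x | f x ≤ c}

/-- `H` is a `C`-vanishing side of the line `l`: the length `len_C` of the sections of `C` by the
lines parallel to `l` within `H` is non-increasing (as a function of the distance from `l`) on the
set of lines meeting `C`.  Here `len_C` of a line is the diameter of the corresponding section. -/
def VanishingSide (C l H : Set Pt) : Prop :=
  ∃ (f : Pt →ₗ[ℝ] ℝ) (c : ℝ), f ≠ 0 ∧ l = {x | f x = c} ∧ H = {x | f x ≤ c} ∧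
    ∀ s t : ℝ, 0 ≤ s → s ≤ t →
      (C ∩ {x | f x = c - s}).Nonempty → (C ∩ {x | f x = c - t}).Nonempty →
      Metric.diam (C ∩ {x | f x = c - t}) ≤ Metric.diam (C ∩ {x | f x = c - s})

/-- A splitting configuration `(u, v, l, σ₁, σ₂)` for `(C, p₁, p₂)`, where
`I = C_{p₁} ∩ C_{p₂}`:  `u ≠ v` are points of `∂I`, `l` is the line through `u` and `v`, both
closed sides of `l` are `I`-vanishing, `l` is not parallel to the line through `p₁, p₂`,
`I ∩ l = [u, v]`, and `∂I` is the union of two connected arcs `σ₁ ⊆ ∂C_{p₁}`, `σ₂ ⊆ ∂C_{p₂}`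
meeting exactly in `{u, v}`. -/
def SplittingConfig (C : Set Pt) (p₁ p₂ u v : Pt) (l σ₁ σ₂ : Set Pt) : Prop :=
  u ≠ v ∧
  u ∈ frontier (tr p₁ C ∩ tr p₂ C) ∧ v ∈ frontier (tr p₁ C ∩ tr p₂ C) ∧
  l = {x | ∃ t : ℝ, x = u + t • (v - u)} ∧
  (∀ H : Set Pt, IsSideOf l H → VanishingSide (tr p₁ C ∩ tr p₂ C) l H) ∧
  (¬ ∃ t : ℝ, p₂ - p₁ = t • (v - u)) ∧
  (tr p₁ C ∩ tr p₂ C) ∩ l = segment ℝ u v ∧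
  IsConnected σ₁ ∧ IsConnected σ₂ ∧
  frontier (tr p₁ C ∩ tr p₂ C) = σ₁ ∪ σ₂ ∧ σ₁ ∩ σ₂ = {u, v} ∧
  σ₁ ⊆ frontier (tr p₁ C) ∧ σ₂ ⊆ frontier (tr p₂ C)

/-! ### Coordinates -/

/-- `T` and `G` are the coordinate functionals of the basis `d`, `e` of the plane. -/
def IsCoord (d e : Pt) (T G : Pt →L[ℝ] ℝ) : Prop :=
  T d = 1 ∧ G d = 0 ∧ T e = 0 ∧ G e = 1 ∧ ∀ x, x = T x • d + G x • e

theorem exists_coord (d e : Pt) (hd : d ≠ 0) (h : ¬ ∃ t : ℝ, e = t • d) :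
    ∃ T G : Pt →L[ℝ] ℝ, IsCoord d e T G := by
  have hD : d 0 * e 1 - d 1 * e 0 ≠ 0 := by
    intro h0
    by_cases h00 : d 0 = 0
    · have h1 : d 1 ≠ 0 := by
        intro h1
        exact hd (by ext i; fin_cases i <;> simp [h00, h1])
      refine h ⟨e 1 / d 1, ?_⟩
      ext i
      fin_cases i
      · have : d 1 * e 0 = 0 := by rw [h00] at h0; linarith
        simp [h00, (mul_eq_zero.1 this).resolve_left h1]
      · simp [h1]
    · refine h ⟨e 0 / d 0, ?_⟩
      ext i
      fin_cases i
      · simp [h00]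
      · simp only [Fin.mk_one, PiLp.smul_apply, smul_eq_mul]
        field_simp
        linarith
  let π₀ : Pt →L[ℝ] ℝ := EuclideanSpace.proj 0
  let π₁ : Pt →L[ℝ] ℝ := EuclideanSpace.proj 1
  have h0 : ∀ x, π₀ x = x 0 := fun _ => rfl
  have h1 : ∀ x, π₁ x = x 1 := fun _ => rfl
  refine ⟨(d 0 * e 1 - d 1 * e 0)⁻¹ • (e 1 • π₀ - e 0 • π₁),
    (d 0 * e 1 - d 1 * e 0)⁻¹ • (d 0 • π₁ - d 1 • π₀), ?_, ?_, ?_, ?_, ?_⟩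
  · simp only [smul_apply, sub_apply, h0, h1, smul_eq_mul]
    field_simp
  · simp only [smul_apply, sub_apply, h0, h1, smul_eq_mul]
    ring
  · simp only [smul_apply, sub_apply, h0, h1, smul_eq_mul]
    ring
  · simp only [smul_apply, sub_apply, h0, h1, smul_eq_mul]
    field_simp
  · intro x
    simp only [smul_apply, sub_apply, h0, h1, smul_eq_mul]
    ext i
    fin_cases i
    · simp only [Fin.zero_eta, PiLp.add_apply, PiLp.smul_apply, smul_eq_mul]
      field_simp
      ring
    · simp only [Fin.mk_one, PiLp.add_apply, PiLp.smul_apply, smul_eq_mul]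
      field_simp
      ring

namespace IsCoord

variable {d e : Pt} {T G : Pt →L[ℝ] ℝ}

theorem neg (h : IsCoord d e T G) : IsCoord d (-e) T (-G) := by
  obtain ⟨h1, h2, h3, h4, h5⟩ := h
  refine ⟨h1, by simp [h2], by simp [h3], by simp [h4], fun x => ?_⟩
  simpa using h5 x

theorem ext_pt (h : IsCoord d e T G) {x y : Pt} (hT : T x = T y) (hG : G x = G y) : x = y := by
  rw [h.2.2.2.2 x, h.2.2.2.2 y, hT, hG]

theorem apply_fun (h : IsCoord d e T G) (f : Pt →L[ℝ] ℝ) (x : Pt) :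
    f x = T x * f d + G x * f e := by
  conv_lhs => rw [h.2.2.2.2 x]
  simp

end IsCoord

/-! ### Supporting lines and rays -/

/-- A functional supporting a convex set at a point of its complement or boundary, strictly on the
interior. -/
theorem exists_support {K : Set Pt} (hK : Convex ℝ K) (hKi : (interior K).Nonempty) {y : Pt}
    (hy : y ∉ interior K) :
    ∃ f : Pt →L[ℝ] ℝ, (∀ x ∈ K, f x ≤ f y) ∧ ∀ x ∈ interior K, f x < f y := by
  obtain ⟨f, hf⟩ := geometric_hahn_banach_open_point hK.interior isOpen_interior hy
  refine ⟨f, fun x hx => ?_, hf⟩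
  have hx' : x ∈ closure (interior K) := by
    rw [hK.closure_interior_eq_closure_of_nonempty_interior hKi]
    exact subset_closure hx
  exact closure_minimal (fun a ha => (hf a ha).le)
    (isClosed_le f.continuous continuous_const) hx'

/-- If a point strictly inside a chord is not interior to `K`, the line of the chord supports `K`.
The sign of `ε` tells on which side of the line `K` lies. -/
theorem exists_side {d e : Pt} {T G : Pt →L[ℝ] ℝ} (hc : IsCoord d e T G) {K : Set Pt}
    (hK : Convex ℝ K) (hKi : (interior K).Nonempty) {u : Pt} (hu : u ∈ K) (hv : u + d ∈ K)
    {τ : ℝ} (h0 : 0 < τ) (h1 : τ < 1) (hy : u + τ • d ∉ interior K) :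
    ∃ ε : ℝ, (∀ x ∈ K, 0 ≤ ε * G (x - u)) ∧ ∀ x ∈ interior K, 0 < ε * G (x - u) := by
  obtain ⟨f, hf, hf'⟩ := exists_support hK hKi hy
  have a1 := hf u hu
  have a2 := hf _ hv
  simp only [map_add, map_smul, smul_eq_mul] at a1 a2
  have a3 : f d = 0 := by
    apply le_antisymm
    · by_contra! h
      nlinarith
    · by_contra! h
      nlinarith
  have key : ∀ x, f x - f (u + τ • d) = G (x - u) * f e := by
    intro x
    have := hc.apply_fun f (x - u)
    simp only [a3, map_add, map_smul, smul_eq_mul, map_sub] at this ⊢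
    linarith
  refine ⟨-f e, fun x hx => ?_, fun x hx => ?_⟩
  · have := key x
    have := hf x hx
    linarith
  · have := key x
    have := hf' x hx
    linarith

/-- If `a ∈ K` lies off the line through the chord `[u, u + d]`, the open segment from the midpoint
of the chord to `a` is interior to `K`, since it is interior to a nondegenerate triangle. -/
theorem ray_mem_interior {d e : Pt} {T G : Pt →L[ℝ] ℝ} (hc : IsCoord d e T G) {K : Set Pt}
    (hK : Convex ℝ K) (hKi : (interior K).Nonempty) {u : Pt} (hu : u ∈ K) (hv : u + d ∈ K)
    {a : Pt} (ha : a ∈ K) (hga : G (a - u) ≠ 0) {c : ℝ} (h0 : 0 < c) (h1 : c < 1) {q : Pt}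
    (hq : q - (u + (1 / 2 : ℝ) • d) = c • (a - (u + (1 / 2 : ℝ) • d))) : q ∈ interior K := by
  by_contra hqi
  obtain ⟨f, hf, hf'⟩ := exists_support hK hKi hqi
  have a1 := hf u hu
  have a2 := hf _ hv
  have a3 := hf a ha
  have a4 := congrArg f hq
  have a5 := hc.apply_fun f (a - u)
  simp only [map_add, map_smul, map_sub, smul_eq_mul] at a1 a2 a4 a5
  have b3 : f a = f q := by
    apply le_antisymm a3
    by_contra! h
    nlinarith
  rw [b3] at a4
  have b4 : (1 - c) * (f q - (f u + 1 / 2 * f d)) = 0 := by linarith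
  have b5 := (mul_eq_zero.1 b4).resolve_left (by linarith)
  have b6 : f d = 0 := by linarith
  have b7 : (G a - G u) * f e = 0 := by
    rw [b6] at a5 b5
    linarith
  rw [map_sub] at hga
  have b8 := (mul_eq_zero.1 b7).resolve_left hga
  obtain ⟨w, hw⟩ := hKi
  have c1 := hf' w hw
  have c2 := hc.apply_fun f w
  have c3 := hc.apply_fun f q
  rw [b6, b8] at c2 c3
  linarith

/-- A ray from the midpoint of the chord `[u, u + d]` has at most one boundary point of `K` off the
line of the chord. -/
theorem ray_unique {d e : Pt} {T G : Pt →L[ℝ] ℝ} (hc : IsCoord d e T G) {K : Set Pt}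
    (hK : Convex ℝ K) (hKi : (interior K).Nonempty) {u : Pt} (hu : u ∈ K) (hv : u + d ∈ K)
    {a s : Pt} (ha : a ∈ K) (hai : a ∉ interior K) (hs : s ∈ K) (hsi : s ∉ interior K)
    (hsign : 0 < G (a - u) * G (s - u))
    (hT : T (s - u) - 1 / 2 = (T (a - u) - 1 / 2) / G (a - u) * G (s - u)) : s = a := by
  have hga : G (a - u) ≠ 0 := by rintro h; simp [h] at hsign
  have hgs : G (s - u) ≠ 0 := by rintro h; simp [h] at hsign
  obtain ⟨c1, c2, c3, c4, c5⟩ := id hc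
  set r := G (s - u) / G (a - u) with hr
  have hr0 : 0 < r := by
    have : r = (G (a - u) * G (s - u)) / (G (a - u)) ^ 2 := by rw [hr]; field_simp
    rw [this]; positivity
  have hq : s - (u + (1 / 2 : ℝ) • d) = r • (a - (u + (1 / 2 : ℝ) • d)) := by
    apply hc.ext_pt
    · rw [← sub_sub, ← sub_sub, map_sub T, map_smul, map_smul, map_sub T (a - u), map_smul, c1]
      simp only [smul_eq_mul, mul_one]
      rw [hT, hr]; field_simp
    · rw [← sub_sub, ← sub_sub, map_sub G, map_smul, map_smul, map_sub G (a - u), map_smul, c2]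
      simp only [smul_eq_mul, mul_zero, sub_zero]
      rw [hr]; field_simp
  rcases lt_trichotomy r 1 with h | h | h
  · exact absurd (ray_mem_interior hc hK hKi hu hv ha hga hr0 h hq) hsi
  · rw [h, one_smul] at hq
    exact sub_left_injective hq
  · refine absurd (ray_mem_interior hc hK hKi hu hv hs hgs (inv_pos.2 hr0)
      (inv_lt_one_of_one_lt₀ h) ?_) hai
    rw [hq, smul_smul, inv_mul_cancel₀ hr0.ne', one_smul]

/-! ### Connected arcs of the boundary -/

/-- A connected part of the boundary containing both ends `u`, `u + d` of a chord cannot miss a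
boundary point `a` above the chord together with a boundary point `z` which is either below the
chord, or its midpoint when `K` lies above the chord. The broken line through `a`, the midpoint of
the chord and `z` separates `u` from `u + d`; it is the zero set of the function `φ` below. -/
theorem separation {d e : Pt} {T G : Pt →L[ℝ] ℝ} (hc : IsCoord d e T G) {K : Set Pt}
    (hK : Convex ℝ K) (hKc : IsClosed K) (hKi : (interior K).Nonempty) {u : Pt} (hu : u ∈ K)
    (hv : u + d ∈ K) {σ : Set Pt} (hσ : IsPreconnected σ) (hσK : σ ⊆ frontier K)
    (huσ : u ∈ σ) (hvσ : u + d ∈ σ) {a z : Pt} (ha : a ∈ K) (hai : a ∉ interior K)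
    (hga : 0 < G (a - u)) (haσ : a ∉ σ) (hzσ : z ∉ σ)
    (hz : (z = u + (1 / 2 : ℝ) • d ∧ ∀ x ∈ K, 0 ≤ G (x - u)) ∨
      (u + (1 / 2 : ℝ) • d ∈ interior K ∧ z ∈ K ∧ z ∉ interior K ∧ G (z - u) < 0)) : False := by
  obtain ⟨c1, c2, c3, c4, c5⟩ := id hc
  let φ : Pt → ℝ := fun s => T (s - u) - 1 / 2
    - (T (a - u) - 1 / 2) / G (a - u) * max (G (s - u)) 0
    - (T (z - u) - 1 / 2) / G (z - u) * min (G (s - u)) 0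
  have hφ : Continuous φ := by fun_prop
  have hφu : φ u = -(1 / 2) := by simp [φ]
  have hφv : φ (u + d) = 1 / 2 := by simp [φ, c1, c2]; norm_num
  obtain ⟨s, hs, hs0⟩ := hσ.intermediate_value huσ hvσ hφ.continuousOn
    (show (0 : ℝ) ∈ Set.Icc _ _ by rw [hφu, hφv]; norm_num)
  have hsf := hσK hs
  rw [hKc.frontier_eq] at hsf
  simp only [φ] at hs0
  rcases lt_trichotomy (G (s - u)) 0 with h | h | h
  · rcases hz with ⟨-, hz⟩ | ⟨-, hzK, hzi, hgz⟩
    · linarith [hz s hsf.1]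
    · rw [max_eq_right h.le, min_eq_left h.le] at hs0
      have := ray_unique hc hK hKi hu hv hzK hzi hsf.1 hsf.2 (mul_pos_of_neg_of_neg hgz h)
        (by linarith)
      exact hzσ (this ▸ hs)
  · have hsm : s = u + (1 / 2 : ℝ) • d := by
      rw [h] at hs0
      simp only [max_self, min_self, mul_zero, sub_zero] at hs0
      have : s - u = (1 / 2 : ℝ) • d := by
        apply hc.ext_pt
        · rw [map_smul, c1, smul_eq_mul]; linarith
        · rw [map_smul, c2, h]; simp
      rw [← this]; abel
    rcases hz with ⟨hz, -⟩ | ⟨hz, -⟩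
    · exact hzσ (by rw [hz, ← hsm]; exact hs)
    · exact hsf.2 (hsm ▸ hz)
  · rw [max_eq_left h.le, min_eq_right h.le] at hs0
    have := ray_unique hc hK hKi hu hv ha hai hsf.1 hsf.2 (mul_pos hga h) (by linarith)
    exact haσ (this ▸ hs)

theorem exists_below {d e : Pt} {T G : Pt →L[ℝ] ℝ} (hc : IsCoord d e T G) {K : Set Pt} {m : Pt}
    (hm : m ∈ interior K) : ∃ x ∈ K, G x < G m := by
  obtain ⟨c1, c2, c3, c4, c5⟩ := id hc
  have hcont : Continuous fun δ : ℝ => m - δ • e := by fun_prop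
  have h1 : ∀ᶠ δ in nhds (0 : ℝ), m - δ • e ∈ interior K :=
    hcont.continuousAt.eventually (isOpen_interior.mem_nhds (by simpa using hm))
  obtain ⟨δ, hδ, hδ0⟩ := ((h1.filter_mono nhdsWithin_le_nhds).and
    (self_mem_nhdsWithin (s := Set.Ioi (0 : ℝ)))).exists
  refine ⟨_, interior_subset hδ, ?_⟩
  have : (0 : ℝ) < δ := hδ0
  simp [c4, this]

/-- Two boundary points strictly above the chord cannot lie one outside `σ₁` and the other outside
`σ₂`: a boundary point `z` on or below the line of the chord, other than its ends, is missing from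
one of the two arcs, and this arc would contradict `separation`. -/
theorem same_side_above {d e : Pt} {T G : Pt →L[ℝ] ℝ} (hc : IsCoord d e T G) {K : Set Pt}
    (hK : Convex ℝ K) (hKc : IsCompact K) (hKi : (interior K).Nonempty) {u : Pt}
    {σ₁ σ₂ : Set Pt} (h₁ : IsPreconnected σ₁) (h₂ : IsPreconnected σ₂)
    (hun : frontier K = σ₁ ∪ σ₂) (hint : σ₁ ∩ σ₂ = {u, u + d}) {a b : Pt}
    (haf : a ∈ frontier K) (ha : a ∉ σ₁) (hga : 0 < G (a - u))
    (hbf : b ∈ frontier K) (hb : b ∉ σ₂) (hgb : 0 < G (b - u)) : False := by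
  obtain ⟨c1, c2, c3, c4, c5⟩ := id hc
  have hus : u ∈ σ₁ ∩ σ₂ := by rw [hint]; simp
  have hvs : u + d ∈ σ₁ ∩ σ₂ := by rw [hint]; simp
  have hs₁ : σ₁ ⊆ frontier K := hun ▸ Set.subset_union_left
  have hs₂ : σ₂ ⊆ frontier K := hun ▸ Set.subset_union_right
  have hcl := hKc.isClosed
  have hfK : frontier K ⊆ K := hcl.frontier_subset
  have hfi : ∀ x ∈ frontier K, x ∉ interior K := fun x hx => by
    rw [hcl.frontier_eq] at hx; exact hx.2
  have hu := hfK (hs₁ hus.1)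
  have hv := hfK (hs₁ hvs.1)
  have hmK : u + (1 / 2 : ℝ) • d ∈ K := by
    have := hK hu hv (a := 1 / 2) (b := 1 / 2) (by norm_num) (by norm_num) (by norm_num)
    convert this using 1
    module
  obtain ⟨z, hzu, hzv, hz⟩ : ∃ z, z ≠ u ∧ z ≠ u + d ∧
      ((z = u + (1 / 2 : ℝ) • d ∧ ∀ x ∈ K, 0 ≤ G (x - u)) ∨
      (u + (1 / 2 : ℝ) • d ∈ interior K ∧ z ∈ K ∧ z ∉ interior K ∧ G (z - u) < 0)) := by
    by_cases hm : u + (1 / 2 : ℝ) • d ∈ interior K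
    · obtain ⟨z, hzK, hzmin⟩ := hKc.exists_isMinOn ⟨u, hu⟩ G.continuous.continuousOn
      have hzi : z ∉ interior K := fun hzi => by
        obtain ⟨x, hx, hlt⟩ := exists_below hc hzi
        exact absurd (hzmin hx) (not_le.2 hlt)
      have hgz : G (z - u) < 0 := by
        obtain ⟨x, hx, hlt⟩ := exists_below hc hm
        have h1 : G z ≤ G x := hzmin hx
        simp [c2] at hlt ⊢
        linarith
      refine ⟨z, ?_, ?_, Or.inr ⟨hm, hzK, hzi, hgz⟩⟩
      · rintro rfl; simp at hgz
      · rintro rfl; simp [c2] at hgz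
    · obtain ⟨ε, hε, hε'⟩ := exists_side hc hK hKi hu hv (by norm_num) (by norm_num) hm
      have hε0 : 0 < ε := by
        have h1 := hε a (hfK haf)
        obtain ⟨w, hw⟩ := hKi
        have h2 := hε' w hw
        rcases lt_trichotomy ε 0 with h | h | h
        · nlinarith
        · simp [h] at h2
        · exact h
      refine ⟨_, ?_, ?_, Or.inl ⟨rfl, fun x hx => nonneg_of_mul_nonneg_right (hε x hx) hε0⟩⟩
      · intro h
        have := congrArg T h
        simp [c1] at this
      · intro h
        have := congrArg T h
        simp [c1] at this
  have hz' : z ∉ σ₁ ∨ z ∉ σ₂ := by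
    by_contra! h
    have : z ∈ σ₁ ∩ σ₂ := h
    rw [hint] at this
    rcases this with h | h
    · exact hzu h
    · exact hzv h
  rcases hz' with h | h
  · exact separation hc hK hcl hKi hu hv h₁ hs₁ hus.1 hvs.1 (hfK haf) (hfi a haf) hga ha h hz
  · exact separation hc hK hcl hKi hu hv h₂ hs₂ hus.2 hvs.2 (hfK hbf) (hfi b hbf) hgb hb h hz

theorem same_side {d e : Pt} {T G : Pt →L[ℝ] ℝ} (hc : IsCoord d e T G) {K : Set Pt}
    (hK : Convex ℝ K) (hKc : IsCompact K) (hKi : (interior K).Nonempty) {u : Pt}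
    {σ₁ σ₂ : Set Pt} (h₁ : IsPreconnected σ₁) (h₂ : IsPreconnected σ₂)
    (hun : frontier K = σ₁ ∪ σ₂) (hint : σ₁ ∩ σ₂ = {u, u + d}) {a b : Pt}
    (haf : a ∈ frontier K) (ha : a ∉ σ₁) (hbf : b ∈ frontier K) (hb : b ∉ σ₂)
    (hab : 0 < G (a - u) * G (b - u)) : False := by
  rcases pos_and_pos_or_neg_and_neg_of_mul_pos hab with ⟨h, h'⟩ | ⟨h, h'⟩
  · exact same_side_above hc hK hKc hKi h₁ h₂ hun hint haf ha h hbf hb h'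
  · exact same_side_above hc.neg hK hKc hKi h₁ h₂ hun hint haf ha (neg_pos.2 h) hbf hb
      (neg_pos.2 h')

/-! ### Translates crossing a chord -/

/-- Let `x` be interior to the translate `K + w`, with `w` pointing to the side of the line of the
chord `[u, u + d]` of `K` opposite to `x`, and let `K + w` meet this line only within the chord.
Then `x` is interior to `K`. Indeed the triangle `u + w`, `u + d + w`, `x` cuts the line in a
segment inside the chord; the part of it beyond the line is homothetic to its translate by `-w`,
which is the triangle `u`, `u + d`, `x - w` inside `K`, and is therefore contained in it. -/
theorem mem_interior_of_translate {d e : Pt} {T G : Pt →L[ℝ] ℝ} (hc : IsCoord d e T G)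
    {K : Set Pt} (hK : Convex ℝ K) {u w x : Pt} (hu : u ∈ K) (hv : u + d ∈ K)
    (hx : x - w ∈ interior K) (hl : ∀ s : ℝ, u + s • d - w ∈ K → 0 ≤ s ∧ s ≤ 1)
    (hopp : G w * G (x - u) < 0) : x ∈ interior K := by
  obtain ⟨c1, c2, c3, c4, c5⟩ := id hc
  set g := G (x - u) with hg
  have hne : G w - g ≠ 0 := by
    intro h
    have : G w = g := by linarith
    rw [this] at hopp
    nlinarith
  set θ := -g / (G w - g) with hθ
  have hθ0 : 0 < θ := by
    have : θ = (g ^ 2 - G w * g) / (G w - g) ^ 2 := by rw [hθ]; field_simp; ring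
    rw [this]
    have : 0 < (G w - g) ^ 2 := by positivity
    have : 0 < g ^ 2 - G w * g := by nlinarith
    positivity
  have hθ1 : 0 < 1 - θ := by
    have : 1 - θ = ((G w) ^ 2 - G w * g) / (G w - g) ^ 2 := by rw [hθ]; field_simp; ring
    rw [this]
    have : 0 < (G w - g) ^ 2 := by positivity
    have : 0 < (G w) ^ 2 - G w * g := by nlinarith
    positivity
  -- `u + s • d` is where the segment from `u + w` to `x` crosses the line of the chord
  set s := (1 - θ) * T (x - u) + θ * T w with hs
  have hcross : (1 - θ) • (x - u) + θ • w = s • d := by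
    apply hc.ext_pt
    · simp only [map_add, map_smul, smul_eq_mul, c1]
      rw [hs]; ring
    · simp only [map_add, map_smul, smul_eq_mul, c2]
      rw [← hg, hθ]; field_simp; ring
  have hxK := interior_subset hx
  have m1 : u + s • d - w ∈ K := by
    have := hK hxK hu hθ1.le hθ0.le (by ring)
    convert this using 1
    rw [← hcross]; module
  have m2 : u + (s + θ) • d - w ∈ K := by
    have := hK hxK hv hθ1.le hθ0.le (by ring)
    convert this using 1
    rw [add_smul, ← hcross]; module
  have l1 := (hl _ m1).1
  have l2 := (hl _ m2).2
  have hy : u + (s / (1 - θ)) • d ∈ K := by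
    have h1 : 0 ≤ s / (1 - θ) := by positivity
    have h2 : s / (1 - θ) ≤ 1 := by rw [div_le_one hθ1]; linarith
    have := hK hu hv (sub_nonneg.2 h2) h1 (by ring)
    convert this using 1
    module
  have := hK.combo_interior_self_mem_interior hx hy hθ0 hθ1.le (by ring)
  convert this using 1
  have e1 : (1 - θ) • (s / (1 - θ)) • d = (1 - θ) • (x - u) + θ • w := by
    rw [smul_smul, mul_div_cancel₀ _ hθ1.ne', hcross]
  rw [smul_add, e1]
  module

/-- Going from an interior point of `K₀` and `K` to a point of `K₀` outside `K`, one leaves `K` at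
a boundary point which is still interior to `K₀`. -/
theorem exists_exit {K₀ K : Set Pt} (hK₀ : Convex ℝ K₀) (hK : IsClosed K) {z x : Pt}
    (hz₀ : z ∈ interior K₀) (hz : z ∈ interior K) (hx₀ : x ∈ K₀) (hx : x ∉ K) :
    ∃ y, y ∈ interior K₀ ∧ y ∈ K ∧ y ∉ interior K := by
  have hpc : IsPreconnected (segment ℝ z x) := (convex_segment z x).isPreconnected
  obtain ⟨y, hy, hyK⟩ : (segment ℝ z x ∩ frontier K).Nonempty := by
    by_contra h
    rw [Set.not_nonempty_iff_eq_empty] at h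
    have hsub : segment ℝ z x ⊆ interior K := by
      apply hpc.subset_left_of_subset_union isOpen_interior hK.isOpen_compl
        (Set.disjoint_left.2 fun a ha hb => hb (interior_subset ha))
      · intro a ha
        by_cases haK : a ∈ K
        · left
          by_contra hai
          have : a ∈ segment ℝ z x ∩ frontier K := ⟨ha, by rw [hK.frontier_eq]; exact ⟨haK, hai⟩⟩
          rw [h] at this
          exact this
        · exact Or.inr haK
      · exact ⟨z, left_mem_segment ℝ z x, hz⟩
    exact hx (interior_subset (hsub (right_mem_segment ℝ z x)))
  rw [hK.frontier_eq] at hyK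
  refine ⟨y, ?_, hyK.1, hyK.2⟩
  rcases eq_or_ne y z with rfl | h1
  · exact hz₀
  · exact hK₀.openSegment_interior_self_subset_interior hz₀ hx₀
      (mem_openSegment_of_ne_left_right h1.symm (by rintro rfl; exact hx hyK.1) hy)

/-! ### Translates of a convex body -/

theorem mem_tr {p x : Pt} {C : Set Pt} : x ∈ tr p C ↔ x - p ∈ C := by
  constructor
  · rintro ⟨y, hy, rfl⟩
    simpa using hy
  · intro h
    exact ⟨x - p, h, by simp⟩

theorem tr_eq_preimage (p : Pt) (C : Set Pt) : tr p C = (Homeomorph.subRight p) ⁻¹' C := by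
  ext x
  rw [mem_tr]
  rfl

theorem mem_interior_tr {p x : Pt} {C : Set Pt} : x ∈ interior (tr p C) ↔ x - p ∈ interior C := by
  rw [tr_eq_preimage, ← Homeomorph.preimage_interior]
  rfl

theorem convex_tr {C : Set Pt} (hC : Convex ℝ C) (p : Pt) : Convex ℝ (tr p C) := by
  have := hC.translate p
  exact this

theorem compact_tr {C : Set Pt} (hC : IsCompact C) (p : Pt) : IsCompact (tr p C) :=
  hC.image (by fun_prop)

/-- The degenerate case, where `C_p` contains in its interior a boundary point of `C_{p₁}` on the
open chord. The line of the chord then supports `C_{p₁}`; as `C_p` reaches across it, `p - p₁`, and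
by `hk` also `p - p₂`, points to the side of this line not containing `a`, which is excluded by
`mem_interior_of_translate`. -/
theorem degenerate {d e : Pt} {T G : Pt →L[ℝ] ℝ} (hc : IsCoord d e T G) {C : Set Pt}
    (hC : IsConvexBody C) {p p₁ p₂ u a : Pt} (hu₁ : u ∈ tr p₁ C) (hv₁ : u + d ∈ tr p₁ C)
    (hu₂ : u ∈ tr p₂ C) (hv₂ : u + d ∈ tr p₂ C)
    (hl : ∀ s : ℝ, u + s • d ∈ tr p C → 0 ≤ s ∧ s ≤ 1)
    (hk : 0 < G (p - p₁) * G (p - p₂))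
    (hap : a ∈ interior (tr p C)) (ha₁ : a ∈ interior (tr p₁ C)) (ha₂ : a ∉ interior (tr p₂ C))
    {τ : ℝ} (h0 : 0 < τ) (h1 : τ < 1) (hb : u + τ • d ∉ interior (tr p₁ C))
    (hbp : u + τ • d ∈ interior (tr p C)) : False := by
  obtain ⟨c1, c2, c3, c4, c5⟩ := id hc
  have hsh : ∀ q x : Pt, x ∈ interior (tr p C) → x - (p - q) ∈ interior (tr q C) := by
    intro q x hx
    rw [mem_interior_tr] at hx ⊢
    convert hx using 1
    abel
  obtain ⟨ε, -, hε⟩ := exists_side hc (convex_tr hC.2.1 p₁) ⟨a, ha₁⟩ hu₁ hv₁ h0 h1 hb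
  have e1 := hε a ha₁
  have e2 := hε _ (hsh p₁ _ hbp)
  have e3 : G (u + τ • d - (p - p₁) - u) = -G (p - p₁) := by
    simp [c2]
  rw [e3] at e2
  refine ha₂ (mem_interior_of_translate hc (convex_tr hC.2.1 p₂) hu₂ hv₂ (w := p - p₂)
    (hsh p₂ a hap) (fun s hs => hl s ?_) ?_)
  · rw [mem_tr] at hs ⊢
    convert hs using 1
    abel
  · have hG : G (p - p₁) ≠ 0 := by intro h; simp [h] at hk
    have h5 : 0 < (ε * G (a - u)) * (ε * -G (p - p₁)) := mul_pos e1 e2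
    have h6 : 0 < ((ε * G (a - u)) * (ε * -G (p - p₁))) * (G (p - p₁) * G (p - p₂)) :=
      mul_pos h5 hk
    by_contra! h7
    have h8 : 0 ≤ (ε * G (p - p₁)) ^ 2 * (G (p - p₂) * G (a - u)) := by positivity
    nlinarith

/-! ### The third translate -/

/-- Let `(u, v, l, σ₁, σ₂)` be a splitting configuration for `(C, p₁, p₂)`
(`p₁ ≠ p₂`, `I = C_{p₁} ∩ C_{p₂}` with nonempty interior) and let `p` be such that `p, p₁, p₂`
are not collinear.  If `u, v ∉ (C_p)°` and `I° ∩ (C_p)° ≠ ∅`, then `C_p ∩ I = C_p ∩ C_{p₁}` or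
`C_p ∩ I = C_p ∩ C_{p₂}`. -/
theorem stmt15 (C : Set Pt) (hC : IsConvexBody C) (p₁ p₂ : Pt) (hp : p₁ ≠ p₂)
    (hI : (interior (tr p₁ C ∩ tr p₂ C)).Nonempty)
    (u v : Pt) (l σ₁ σ₂ : Set Pt) (hsc : SplittingConfig C p₁ p₂ u v l σ₁ σ₂)
    (p : Pt) (hcol : ¬ Collinear ℝ ({p, p₁, p₂} : Set Pt))
    (hu : u ∉ interior (tr p C)) (hv : v ∉ interior (tr p C))
    (hmeet : (interior (tr p₁ C ∩ tr p₂ C) ∩ interior (tr p C)).Nonempty) :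
    tr p C ∩ (tr p₁ C ∩ tr p₂ C) = tr p C ∩ tr p₁ C ∨
    tr p C ∩ (tr p₁ C ∩ tr p₂ C) = tr p C ∩ tr p₂ C := by
  obtain ⟨huv, -, -, hl, -, hpar, hchord, hσ₁, hσ₂, hun, hint, hs₁, hs₂⟩ := hsc
  obtain ⟨d, rfl⟩ : ∃ d, v = u + d := ⟨v - u, by abel⟩
  simp only [add_sub_cancel_left] at hl hpar
  have hd : d ≠ 0 := by rintro rfl; simp at huv
  obtain ⟨T, G, hc⟩ := exists_coord d (p₂ - p₁) hd hpar
  obtain ⟨c1, c2, c3, c4, c5⟩ := id hc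
  have hcv := convex_tr hC.2.1
  have hcp := compact_tr hC.1
  have hcl : ∀ q, IsClosed (tr q C) := fun q => (hcp q).isClosed
  have hus : u ∈ σ₁ ∩ σ₂ := by rw [hint]; simp
  have hvs : u + d ∈ σ₁ ∩ σ₂ := by rw [hint]; simp
  have hu₁ : u ∈ tr p₁ C := (hcl p₁).frontier_subset (hs₁ hus.1)
  have hu₂ : u ∈ tr p₂ C := (hcl p₂).frontier_subset (hs₂ hus.2)
  have hv₁ : u + d ∈ tr p₁ C := (hcl p₁).frontier_subset (hs₁ hvs.1)
  have hv₂ : u + d ∈ tr p₂ C := (hcl p₂).frontier_subset (hs₂ hvs.2)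
  by_contra hcon
  push Not at hcon
  obtain ⟨hcon₁, hcon₂⟩ := hcon
  obtain ⟨z, hzI, hzp⟩ := hmeet
  have hzI' := hzI
  rw [interior_inter] at hzI'
  -- `a` and `b` are points of the two arcs, interior to `C_p`
  obtain ⟨a, hap, ha₁, ha₂, ha₂'⟩ : ∃ a, a ∈ interior (tr p C) ∧ a ∈ interior (tr p₁ C) ∧
      a ∈ tr p₂ C ∧ a ∉ interior (tr p₂ C) := by
    obtain ⟨x, hx, hx₁, hx₂⟩ : ∃ x, x ∈ tr p C ∧ x ∈ tr p₁ C ∧ x ∉ tr p₂ C := by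
      by_contra! h
      exact hcon₁ (Set.ext fun x => ⟨fun hx => ⟨hx.1, hx.2.1⟩,
        fun hx => ⟨hx.1, hx.2, h x hx.1 hx.2⟩⟩)
    obtain ⟨y, hy, hy'⟩ := exists_exit ((hcv p).inter (hcv p₁)) (hcl p₂) (x := x) (z := z)
      (by rw [interior_inter]; exact ⟨hzp, hzI'.1⟩) hzI'.2 ⟨hx, hx₁⟩ hx₂
    rw [interior_inter] at hy
    exact ⟨y, hy.1, hy.2, hy'⟩
  obtain ⟨b, hbp, hb₂, hb₁, hb₁'⟩ : ∃ b, b ∈ interior (tr p C) ∧ b ∈ interior (tr p₂ C) ∧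
      b ∈ tr p₁ C ∧ b ∉ interior (tr p₁ C) := by
    obtain ⟨x, hx, hx₂, hx₁⟩ : ∃ x, x ∈ tr p C ∧ x ∈ tr p₂ C ∧ x ∉ tr p₁ C := by
      by_contra! h
      exact hcon₂ (Set.ext fun x => ⟨fun hx => ⟨hx.1, hx.2.2⟩,
        fun hx => ⟨hx.1, h x hx.1 hx.2, hx.2⟩⟩)
    obtain ⟨y, hy, hy'⟩ := exists_exit ((hcv p).inter (hcv p₂)) (hcl p₁) (x := x) (z := z)
      (by rw [interior_inter]; exact ⟨hzp, hzI'.2⟩) hzI'.1 ⟨hx, hx₂⟩ hx₁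
    rw [interior_inter] at hy
    exact ⟨y, hy.1, hy.2, hy'⟩
  have hIcv := (hcv p₁).inter (hcv p₂)
  have hIcp : IsCompact (tr p₁ C ∩ tr p₂ C) := (hcp p₁).inter_right (hcl p₂)
  have haI : a ∈ tr p₁ C ∩ tr p₂ C := ⟨interior_subset ha₁, ha₂⟩
  have hbI : b ∈ tr p₁ C ∩ tr p₂ C := ⟨hb₁, interior_subset hb₂⟩
  have haf : a ∈ frontier (tr p₁ C ∩ tr p₂ C) := by
    rw [hIcp.isClosed.frontier_eq, interior_inter]; exact ⟨haI, fun h => ha₂' h.2⟩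
  have hbf : b ∈ frontier (tr p₁ C ∩ tr p₂ C) := by
    rw [hIcp.isClosed.frontier_eq, interior_inter]; exact ⟨hbI, fun h => hb₁' h.1⟩
  have haσ : a ∉ σ₁ := fun h => by
    have := hs₁ h
    rw [(hcl p₁).frontier_eq] at this
    exact this.2 ha₁
  have hbσ : b ∉ σ₂ := fun h => by
    have := hs₂ h
    rw [(hcl p₂).frontier_eq] at this
    exact this.2 hb₂
  have honl : ∀ y, y ∈ interior (tr p C) → y ∈ tr p₁ C ∩ tr p₂ C → G (y - u) = 0 →
      ∃ τ : ℝ, 0 < τ ∧ τ < 1 ∧ y = u + τ • d := by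
    intro y hy hyI hyG
    have hyl : y ∈ l := by
      rw [hl]
      refine ⟨T (y - u), ?_⟩
      have := c5 (y - u)
      rw [hyG, zero_smul, add_zero] at this
      rw [← this]; abel
    have hys : y ∈ segment ℝ u (u + d) := hchord ▸ (⟨hyI, hyl⟩ : y ∈ (tr p₁ C ∩ tr p₂ C) ∩ l)
    rw [segment_eq_image'] at hys
    obtain ⟨τ, ⟨h0, h1⟩, rfl⟩ := hys
    simp only [add_sub_cancel_left] at hy ⊢
    refine ⟨τ, lt_of_le_of_ne h0 ?_, lt_of_le_of_ne h1 ?_, rfl⟩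
    · rintro rfl; exact hu (by simpa using hy)
    · rintro rfl; exact hv (by simpa using hy)
  have hopp : G (a - u) * G (b - u) ≤ 0 := by
    by_contra! h
    exact same_side hc hIcv hIcp hI hσ₁.isPreconnected hσ₂.isPreconnected hun hint haf haσ hbf
      hbσ h
  -- `C_p` has an interior point on the open chord
  obtain ⟨τ, hτ0, hτ1, hτp⟩ : ∃ τ : ℝ, 0 < τ ∧ τ < 1 ∧ u + τ • d ∈ interior (tr p C) := by
    rcases eq_or_ne (G (a - u)) 0 with ha | ha
    · obtain ⟨τ, h0, h1, rfl⟩ := honl a hap haI ha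
      exact ⟨τ, h0, h1, hap⟩
    · have hne : G (a - u) - G (b - u) ≠ 0 := by
        intro h
        have : G (b - u) = G (a - u) := by linarith
        rw [this] at hopp
        have : 0 < G (a - u) * G (a - u) := mul_self_pos.2 ha
        linarith
      set A := G (a - u)
      set B := G (b - u)
      have hs : 0 < (A - B) ^ 2 := by positivity
      have hα : -B / (A - B) = (B ^ 2 - A * B) / (A - B) ^ 2 := by field_simp; ring
      have hβ : A / (A - B) = (A ^ 2 - A * B) / (A - B) ^ 2 := by field_simp
      have hα0 : 0 ≤ -B / (A - B) := by
        rw [hα]; exact div_nonneg (by nlinarith) hs.le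
      have hβ0 : 0 ≤ A / (A - B) := by
        rw [hβ]; exact div_nonneg (by nlinarith) hs.le
      have hsum : -B / (A - B) + A / (A - B) = 1 := by field_simp; ring
      have hG : G ((-B / (A - B)) • a + (A / (A - B)) • b - u) = 0 := by
        have : (-B / (A - B)) • a + (A / (A - B)) • b - u
            = (-B / (A - B)) • (a - u) + (A / (A - B)) • (b - u) := by
          rw [smul_sub, smul_sub]
          nth_rewrite 1 [← one_smul ℝ u]
          rw [← hsum, add_smul]
          abel
        rw [this, map_add, map_smul, map_smul, smul_eq_mul, smul_eq_mul]
        change -B / (A - B) * A + A / (A - B) * B = 0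
        field_simp; ring
      have hyp := (hcv p).interior hap hbp hα0 hβ0 hsum
      obtain ⟨τ, h0, h1, h2⟩ := honl _ hyp (hIcv haI hbI hα0 hβ0 hsum) hG
      exact ⟨τ, h0, h1, h2 ▸ hyp⟩
  -- hence `C_p` meets the line of the chord only within the chord
  have hsl : ∀ s : ℝ, u + s • d ∈ tr p C → 0 ≤ s ∧ s ≤ 1 := by
    intro s hs
    constructor
    · by_contra! h
      have hpos : 0 < τ - s := by linarith
      have := (hcv p).combo_interior_self_mem_interior hτp hs (a := -s / (τ - s))
        (b := τ / (τ - s)) (div_pos (by linarith) hpos) (div_pos hτ0 hpos).le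
        (by field_simp; ring)
      apply hu
      convert this using 1
      have e1 : -s / (τ - s) + τ / (τ - s) = 1 := by field_simp; ring
      have e2 : -s / (τ - s) * τ + τ / (τ - s) * s = 0 := by field_simp; ring
      rw [smul_add, smul_add, smul_smul, smul_smul, add_add_add_comm, ← add_smul, ← add_smul,
        e1, e2]
      simp
    · by_contra! h
      have hpos : 0 < s - τ := by linarith
      have := (hcv p).combo_interior_self_mem_interior hτp hs (a := (s - 1) / (s - τ))
        (b := (1 - τ) / (s - τ)) (div_pos (by linarith) hpos)
        (div_pos (by linarith) hpos).le (by field_simp; ring)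
      apply hv
      convert this using 1
      have e1 : (s - 1) / (s - τ) + (1 - τ) / (s - τ) = 1 := by field_simp; ring
      have e2 : (s - 1) / (s - τ) * τ + (1 - τ) / (s - τ) * s = 1 := by field_simp; ring
      rw [smul_add, smul_add, smul_smul, smul_smul, add_add_add_comm, ← add_smul, ← add_smul,
        e1, e2]
      simp
  have hk₁ : G (p - p₁) = G (p - p₂) + 1 := by
    rw [← c4, ← map_add]; congr 1; abel
  -- the parallelogram with sides `[u, v] + (p - pᵢ)`, contained in `C_p`, misses the line
  have hk : 0 < G (p - p₁) * G (p - p₂) := by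
    by_contra! h
    set k := G (p - p₂) with hkdef
    rw [hk₁] at h
    have k0 : 0 ≤ -k := by nlinarith
    have k1 : 0 ≤ 1 + k := by nlinarith
    have hpp : p - p₂ = T (p - p₂) • d + k • (p₂ - p₁) := c5 _
    have hmem : ∀ x, x ∈ tr p₁ C → x ∈ tr p₂ C → x + T (p - p₂) • d ∈ tr p C := by
      intro x h1 h2
      have h1' : x + (p - p₁) ∈ tr p C := by
        rw [mem_tr] at h1 ⊢; convert h1 using 1; abel
      have h2' : x + (p - p₂) ∈ tr p C := by
        rw [mem_tr] at h2 ⊢; convert h2 using 1; abel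
      have := hcv p h1' h2' k0 k1 (by ring)
      convert this using 1
      have e1 : T (p - p₂) • d = p - p₂ - k • (p₂ - p₁) := by rw [eq_sub_iff_add_eq]; exact hpp.symm
      rw [e1]
      module
    have m1 := (hsl _ (hmem u hu₁ hu₂)).1
    have m2 : T (p - p₂) ≤ 0 := by
      have := (hsl (1 + T (p - p₂)) (by
        have := hmem _ hv₁ hv₂
        rwa [add_assoc, show d + T (p - p₂) • d = (1 + T (p - p₂)) • d by
          rw [add_smul, one_smul]] at this)).2
      linarith
    rw [le_antisymm m2 m1, zero_smul, zero_add] at hpp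
    apply hcol
    rw [collinear_iff_of_mem (p₀ := p₂) (by simp)]
    refine ⟨p₂ - p₁, ?_⟩
    rintro x (rfl | rfl | rfl)
    · exact ⟨k, by rw [← hpp]; simp⟩
    · exact ⟨-1, by simp⟩
    · exact ⟨0, by simp⟩
  rcases eq_or_ne (G (b - u)) 0 with hb0 | hb0
  · obtain ⟨t, t0, t1, rfl⟩ := honl b hbp hbI hb0
    exact degenerate hc hC hu₁ hv₁ hu₂ hv₂ hsl hk hap ha₁ ha₂' t0 t1 hb₁' hbp
  rcases eq_or_ne (G (a - u)) 0 with ha0 | ha0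
  · obtain ⟨t, t0, t1, rfl⟩ := honl a hap haI ha0
    exact degenerate hc hC hu₂ hv₂ hu₁ hv₁ hsl (mul_comm (G (p - p₁)) _ ▸ hk) hbp hb₂ hb₁' t0 t1
      ha₂' hap
  have hopp' : G (a - u) * G (b - u) < 0 := lt_of_le_of_ne hopp (mul_ne_zero ha0 hb0)
  have key : ∀ q x : Pt, u ∈ tr q C → u + d ∈ tr q C → x ∈ interior (tr p C) →
      G (p - q) * G (x - u) < 0 → x ∈ interior (tr q C) := by
    intro q x hq hq' hx hneg
    refine mem_interior_of_translate hc (hcv q) hq hq' (w := p - q) ?_ (fun s hs => hsl s ?_) hneg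
    · rw [mem_interior_tr] at hx ⊢
      convert hx using 1
      abel
    · rw [mem_tr] at hs ⊢
      convert hs using 1
      abel
  -- the point on the side of the line opposite to the parallelogram gives the contradiction
  by_cases h : G (p - p₂) * G (a - u) < 0
  · exact ha₂' (key p₂ a hu₂ hv₂ hap h)
  · refine hb₁' (key p₁ b hu₁ hv₁ hbp ?_)
    have hp₂ : G (p - p₂) ≠ 0 := by intro h; simp [h] at hk
    push Not at h
    have h' : 0 < G (p - p₂) * G (a - u) := lt_of_le_of_ne h (mul_ne_zero hp₂ ha0).symm
    by_contra! h3
    have h4 := mul_pos hk h'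
    have h5 : 0 ≤ (G (p - p₁) * G (b - u)) * (G (p - p₂) * G (a - u)) := mul_nonneg h3 h'.le
    have h6 : (G (p - p₁) * G (p - p₂)) * (G (a - u) * G (b - u)) < 0 :=
      mul_neg_of_pos_of_neg hk hopp'
    linarith
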